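/- arXiv:2304.02304 — 2 statements merged into one kernel-verified Lean document; each statement's English description precedes it below -/
import Mathlib

section
/- (Proposition 3.2) There is no ρ-invariant subspace of ℂ⁶ of dimension 2 if and only if λ₁³ ≠ q. -/
open Matrix Polynomial

noncomputable def M1 (q l : ℂ) : Matrix (Fin 6) (Fin 6) ℂ :=
  !![q, -q^2*l, q^2, q^2, -q^2/l, 1;
     0, l,      q^2, 0,   1/l,    1;
     0, 0,      q^2, 0,   0,      1;
     0, 0,      0,   q^2, -q^2/l, 1;
     0, 0,      0,   0,   1/l,    1;
     0, 0,      0,   0,   0,      1]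

noncomputable def M2 (q l : ℂ) : Matrix (Fin 6) (Fin 6) ℂ :=
  !![1,    0,    0,   0,   0,   0;
     -1/l, 1/l,  0,   0,   0,   0;
     q,    1,    q^2, 0,   0,   0;
     -q^2, 0,    0,   q^2, 0,   0;
     l,    -l,   0,   -l,  l,   0;
     -1,   -q^2, -q,  1,   q^2, q]

/-- A subspace `W ⊆ ℂ⁶` is ρ-invariant if it is mapped into itself by both `M1` and `M2`
(acting on column vectors). -/
def RhoInvariant (q l : ℂ) (W : Submodule ℂ (Fin 6 → ℂ)) : Prop :=
  (∀ x ∈ W, (M1 q l).mulVec x ∈ W) ∧ (∀ x ∈ W, (M2 q l).mulVec x ∈ W)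

/-!
The half twist `M1 * M2 * M1` is an antidiagonal matrix `S` with `S * S = -q² • 1`. Let `W` be an
invariant plane. If some `x ≠ 0` in `W` has only its first two coordinates nonzero, then `x` and
`S x` span `W`, and the third and fourth coordinates of `M2 x` give `x = 0`. So `W` embeds into the
last four coordinates, and the eigenvalues of `M1` on `W` are two of `q², q², l⁻¹, 1`; at least one
of the two is a cube root of unity. A plane carries a square root of `-q²` only as a scalar, which
forces `M1 = M2` and `M1⁶ = -q²` on `W` and contradicts that cube root of unity, or with
determinant `q²`, so that `(det M1)³ = q²` on `W`. The latter needs `l⁻¹` as the other eigenvalue,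
and then `l⁻³ = q²`, that is `l³ = q`.

Conversely, if `l³ = q`, then `l` is a primitive ninth root of unity, and an `l⁻¹`-eigenvector of
`M1` and its image under `M2` span an invariant plane.
-/

section Charpoly

variable {K V : Type*} [Field K] [AddCommGroup V] [Module K V]

theorem charpoly_restrict_dvd [Infinite K] [FiniteDimensional K V] (f : Module.End K V)
    {W : Submodule K V} (hW : ∀ x ∈ W, f x ∈ W) : (f.restrict hW).charpoly ∣ f.charpoly := by
  refine ⟨(W.mapQ W f hW).charpoly, Polynomial.funext fun t ↦ ?_⟩
  have ht : W ≤ W.comap (algebraMap K (Module.End K V) t - f) := fun x hx ↦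
    W.sub_mem (W.smul_mem t hx) (hW x hx)
  rw [eval_mul, LinearMap.eval_charpoly, LinearMap.eval_charpoly, LinearMap.eval_charpoly,
    LinearMap.det_eq_det_mul_det W _ ht]
  congr 2
  ext x
  rfl

theorem charpoly_dvd_charpoly_of_injective [Infinite K] [FiniteDimensional K V] {U : Type*}
    [AddCommGroup U] [Module K U] [FiniteDimensional K U] {f : Module.End K V}
    {g : Module.End K U} {j : V →ₗ[K] U} (hj : Function.Injective j)
    (hfg : ∀ x, j (f x) = g (j x)) : f.charpoly ∣ g.charpoly := by
  have hg : ∀ y ∈ LinearMap.range j, g y ∈ LinearMap.range j := by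
    rintro _ ⟨x, rfl⟩
    exact ⟨f x, hfg x⟩
  have hconj : (LinearEquiv.ofInjective j hj).conj f = g.restrict hg := by
    ext y
    obtain ⟨x, rfl⟩ := (LinearEquiv.ofInjective j hj).surjective y
    simp [LinearEquiv.conj_apply, hfg]
  rw [← LinearEquiv.charpoly_conj (LinearEquiv.ofInjective j hj), hconj]
  exact charpoly_restrict_dvd g hg

theorem roots_charpoly_of_isUpperTriangular {n : Type*} [Fintype n] [DecidableEq n] [LinearOrder n]
    {M : Matrix n n K} (hM : M.IsUpperTriangular) :
    M.charpoly.roots = Finset.univ.val.map M.diag := by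
  rw [charpoly_of_isUpperTriangular M hM,
    ← roots_multiset_prod_X_sub_C (Finset.univ.val.map M.diag), Multiset.map_map]
  rfl

end Charpoly

section Plane

variable {K V : Type*} [Field K] [AddCommGroup V] [Module K V]

theorem charpoly_of_finrank_eq_two (hV : Module.finrank K V = 2) [FiniteDimensional K V]
    (f : Module.End K V) :
    f.charpoly = X ^ 2 - C (LinearMap.trace K V f) * X + C (LinearMap.det f) := by
  let b := Module.finBasisOfFinrankEq K V hV
  rw [← f.charpoly_toMatrix b, charpoly_fin_two, LinearMap.det_toMatrix,
    LinearMap.trace_eq_matrix_trace K b]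

theorem det_eq_neg_or_eq_smul_one_of_mul_self_eq (hV : Module.finrank K V = 2)
    {f : Module.End K V} {c : K} (hf : f * f = c • 1) :
    LinearMap.det f = -c ∨ ∃ s : K, f = s • 1 := by
  have : FiniteDimensional K V := Module.finite_of_finrank_eq_succ hV
  have : Nontrivial V := Module.nontrivial_of_finrank_eq_succ hV
  have hCH : LinearMap.trace K V f • f = (c + LinearMap.det f) • 1 := by
    have h := f.aeval_self_charpoly
    simp only [charpoly_of_finrank_eq_two hV, map_add, map_sub, map_mul, aeval_X, aeval_C,
      Algebra.algebraMap_eq_smul_one, smul_mul_assoc, one_mul, pow_two, hf] at h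
    rw [add_smul, ← sub_eq_zero, ← neg_eq_zero, ← h]
    abel
  by_cases ht : LinearMap.trace K V f = 0
  · left
    rw [ht, zero_smul, eq_comm, smul_eq_zero_iff_left one_ne_zero] at hCH
    exact eq_neg_of_add_eq_zero_right hCH
  · right
    exact ⟨_, by rw [← inv_smul_smul₀ ht f, hCH, smul_smul]⟩

theorem det_pow_three_eq_or_pow_six_eq_of_braid (hV : Module.finrank K V = 2)
    {f g : Module.End K V} {c : K} (hc : c ≠ 0) (hbraid : f * g * f = g * f * g)
    (htwist : (f * g * f) * (f * g * f) = c • 1) :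
    LinearMap.det f ^ 3 = -c ∨ f ^ 6 = c • 1 := by
  rcases det_eq_neg_or_eq_smul_one_of_mul_self_eq hV htwist with hdet | ⟨s, hs⟩
  · left
    have hdetfg : LinearMap.det f = LinearMap.det g := by
      have h := congrArg LinearMap.det hbraid
      simp only [map_mul] at h hdet
      grind
    rw [← hdet, map_mul, map_mul, ← hdetfg]
    ring
  · right
    have : Nontrivial V := Module.nontrivial_of_finrank_eq_succ hV
    have hs0 : s ≠ 0 := by
      rintro rfl
      rw [hs, zero_smul, zero_mul, eq_comm, smul_eq_zero_iff_left one_ne_zero] at htwist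
      exact hc htwist
    have hfg : f = g := by
      have h : f * (f * g * f) = f * g * f * g := by
        nth_rw 1 [hbraid]
        simp only [mul_assoc]
      rw [hs, mul_smul_one, smul_one_mul] at h
      exact smul_right_injective _ hs0 h
    subst hfg
    rw [← htwist]
    noncomm_ring

theorem mem_span_pair_of_finrank_eq_two (hV : Module.finrank K V = 2) {x y : V}
    (hxy : LinearIndependent K ![x, y]) (z : V) : ∃ a b : K, a • x + b • y = z := by
  have : FiniteDimensional K V := Module.finite_of_finrank_eq_succ hV
  have h := hxy.span_eq_top_of_card_eq_finrank' (by simp [hV])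
  rw [Matrix.range_cons_cons_empty] at h
  exact Submodule.mem_span_pair.mp (h ▸ Submodule.mem_top)

end Plane

theorem mulVec_mem_span_pair {n R : Type*} [Fintype n] [CommRing R] (A : Matrix n n R)
    {u v : n → R} (hu : A *ᵥ u ∈ Submodule.span R {u, v}) (hv : A *ᵥ v ∈ Submodule.span R {u, v}) :
    ∀ x ∈ Submodule.span R {u, v}, A *ᵥ x ∈ Submodule.span R {u, v} := by
  intro x hx
  obtain ⟨a, b, rfl⟩ := Submodule.mem_span_pair.mp hx
  rw [Matrix.mulVec_add, Matrix.mulVec_smul, Matrix.mulVec_smul]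
  exact add_mem (Submodule.smul_mem _ a hu) (Submodule.smul_mem _ b hv)

section HalfTwist

/-- The image `M1 * M2 * M1` of the half twist `σ₁σ₂σ₁`, whose square is the full twist generating
the center of the braid group on three strands; written out entrywise. -/
noncomputable def halfTwist (q l : ℂ) : Matrix (Fin 6) (Fin 6) ℂ :=
  !![0,  0,     0,  0,   0,      q;
     0,  0,     0,  0,   -q / l, 0;
     0,  0,     0,  q^2, 0,      0;
     0,  0,     -1, 0,   0,      0;
     0,  q * l, 0,  0,   0,      0;
     -q, 0,     0,  0,   0,      0]

variable {q l : ℂ}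

theorem M1_mulVec (x : Fin 6 → ℂ) :
    M1 q l *ᵥ x =
      ![q * x 0 - q ^ 2 * l * x 1 + q ^ 2 * x 2 + q ^ 2 * x 3 - q ^ 2 / l * x 4 + x 5,
        l * x 1 + q ^ 2 * x 2 + 1 / l * x 4 + x 5,
        q ^ 2 * x 2 + x 5,
        q ^ 2 * x 3 - q ^ 2 / l * x 4 + x 5,
        1 / l * x 4 + x 5,
        x 5] := by
  ext i
  fin_cases i <;> simp [M1, Matrix.mulVec, dotProduct, Fin.sum_univ_succ] <;> ring

theorem M2_mulVec (x : Fin 6 → ℂ) :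
    M2 q l *ᵥ x =
      ![x 0,
        -1 / l * x 0 + 1 / l * x 1,
        q * x 0 + x 1 + q ^ 2 * x 2,
        -q ^ 2 * x 0 + q ^ 2 * x 3,
        l * x 0 - l * x 1 - l * x 3 + l * x 4,
        -x 0 - q ^ 2 * x 1 - q * x 2 + x 3 + q ^ 2 * x 4 + q * x 5] := by
  ext i
  fin_cases i <;> simp [M2, Matrix.mulVec, dotProduct, Fin.sum_univ_succ] <;> ring

theorem halfTwist_mulVec (x : Fin 6 → ℂ) :
    halfTwist q l *ᵥ x = ![q * x 5, -q / l * x 4, q ^ 2 * x 3, -x 2, q * l * x 1, -q * x 0] := by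
  ext i
  fin_cases i <;> simp [halfTwist, Matrix.mulVec, dotProduct, Fin.sum_univ_succ]

theorem M1_mul_M2_mul_M1 (hq : q ^ 2 + q + 1 = 0) (hl : l ≠ 0) :
    M1 q l * M2 q l * M1 q l = halfTwist q l := by
  refine Matrix.ext_iff_mulVec.mpr fun x ↦ ?_
  simp only [← Matrix.mulVec_mulVec, M1_mulVec, M2_mulVec, halfTwist_mulVec]
  ext i
  fin_cases i <;> simp <;> grind

theorem M2_mul_M1_mul_M2 (hq : q ^ 2 + q + 1 = 0) (hl : l ≠ 0) :
    M2 q l * M1 q l * M2 q l = halfTwist q l := by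
  refine Matrix.ext_iff_mulVec.mpr fun x ↦ ?_
  simp only [← Matrix.mulVec_mulVec, M1_mulVec, M2_mulVec, halfTwist_mulVec]
  ext i
  fin_cases i <;> simp <;> grind

theorem halfTwist_mul_self (hl : l ≠ 0) : halfTwist q l * halfTwist q l = (-q ^ 2) • 1 := by
  refine Matrix.ext_iff_mulVec.mpr fun x ↦ ?_
  simp only [← Matrix.mulVec_mulVec, halfTwist_mulVec, Matrix.smul_mulVec, Matrix.one_mulVec]
  ext i
  fin_cases i <;> simp <;> grind

theorem linearIndependent_pair_halfTwist_mulVec (hq : q ≠ 0) (hl : l ≠ 0) {x : Fin 6 → ℂ}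
    (hx : x ≠ 0) (h2 : x 2 = 0) (h3 : x 3 = 0) (h4 : x 4 = 0) (h5 : x 5 = 0) :
    LinearIndependent ℂ ![x, halfTwist q l *ᵥ x] := by
  have h01 : x 0 ≠ 0 ∨ x 1 ≠ 0 := by
    by_contra! h
    exact hx (funext fun i ↦ by fin_cases i <;> simp [h, h2, h3, h4, h5])
  rw [LinearIndependent.pair_iff]
  intro s t hst
  have hcoord : ∀ i, s * x i + t * (halfTwist q l *ᵥ x) i = 0 := congrFun hst
  rw [halfTwist_mulVec] at hcoord
  have e0 : s = 0 ∨ x 0 = 0 := by simpa [h5] using hcoord 0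
  have e1 : s = 0 ∨ x 1 = 0 := by simpa [h4] using hcoord 1
  have e4 : t = 0 ∨ x 1 = 0 := by simpa [h4, hq, hl] using hcoord 4
  have e5 : t = 0 ∨ x 0 = 0 := by simpa [h5, hq] using hcoord 5
  tauto

end HalfTwist

namespace RhoInvariant

variable {q l : ℂ} {W : Submodule ℂ (Fin 6 → ℂ)}

/-- The action of the braid generator `σ₁` on an invariant subspace. -/
noncomputable def sigma1 (hW : RhoInvariant q l W) : Module.End ℂ W :=
  (M1 q l).mulVecLin.restrict hW.1

/-- The action of the braid generator `σ₂` on an invariant subspace. -/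
noncomputable def sigma2 (hW : RhoInvariant q l W) : Module.End ℂ W :=
  (M2 q l).mulVecLin.restrict hW.2

theorem coe_sigma1_mul_sigma2_mul_sigma1 (hW : RhoInvariant q l W) (hq : q ^ 2 + q + 1 = 0)
    (hl : l ≠ 0) (x : W) :
    ((hW.sigma1 * hW.sigma2 * hW.sigma1) x : Fin 6 → ℂ) = halfTwist q l *ᵥ x := by
  rw [← M1_mul_M2_mul_M1 hq hl, ← Matrix.mulVec_mulVec, ← Matrix.mulVec_mulVec]
  rfl

theorem sigma_braid (hW : RhoInvariant q l W) (hq : q ^ 2 + q + 1 = 0) (hl : l ≠ 0) :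
    hW.sigma1 * hW.sigma2 * hW.sigma1 = hW.sigma2 * hW.sigma1 * hW.sigma2 := by
  ext1 x
  refine Subtype.ext ?_
  rw [coe_sigma1_mul_sigma2_mul_sigma1 hW hq hl, ← M2_mul_M1_mul_M2 hq hl,
    ← Matrix.mulVec_mulVec, ← Matrix.mulVec_mulVec]
  rfl

theorem sigma_twist_mul_self (hW : RhoInvariant q l W) (hq : q ^ 2 + q + 1 = 0) (hl : l ≠ 0) :
    (hW.sigma1 * hW.sigma2 * hW.sigma1) * (hW.sigma1 * hW.sigma2 * hW.sigma1) =
      (-q ^ 2) • 1 := by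
  ext1 x
  refine Subtype.ext ?_
  rw [Module.End.mul_apply, coe_sigma1_mul_sigma2_mul_sigma1 hW hq hl,
    coe_sigma1_mul_sigma2_mul_sigma1 hW hq hl, Matrix.mulVec_mulVec, halfTwist_mul_self hl,
    Matrix.smul_mulVec, Matrix.one_mulVec]
  rfl

theorem halfTwist_mulVec_mem (hW : RhoInvariant q l W) (hq : q ^ 2 + q + 1 = 0) (hl : l ≠ 0)
    {x : Fin 6 → ℂ} (hx : x ∈ W) : halfTwist q l *ᵥ x ∈ W := by
  rw [← coe_sigma1_mul_sigma2_mul_sigma1 hW hq hl ⟨x, hx⟩]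
  exact Subtype.prop _

theorem eq_zero_of_mem_of_tail_eq_zero (hW : RhoInvariant q l W) (hq : q ^ 2 + q + 1 = 0)
    (hl : l ≠ 0) (hdim : Module.finrank ℂ W = 2) {x : Fin 6 → ℂ} (hx : x ∈ W)
    (h2 : x 2 = 0) (h3 : x 3 = 0) (h4 : x 4 = 0) (h5 : x 5 = 0) : x = 0 := by
  have hq0 : q ≠ 0 := by grind
  by_contra hx0
  have hindep : LinearIndependent ℂ
      ![(⟨x, hx⟩ : W), ⟨halfTwist q l *ᵥ x, hW.halfTwist_mulVec_mem hq hl hx⟩] := by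
    refine LinearIndependent.of_comp W.subtype ?_
    rw [← FinVec.map_eq]
    exact linearIndependent_pair_halfTwist_mulVec hq0 hl hx0 h2 h3 h4 h5
  obtain ⟨a, b, hab⟩ := mem_span_pair_of_finrank_eq_two hdim hindep ⟨_, hW.2 x hx⟩
  have hcoord : ∀ i, a * x i + b * (halfTwist q l *ᵥ x) i = (M2 q l *ᵥ x) i := fun i ↦
    congrFun (congrArg Subtype.val hab) i
  rw [halfTwist_mulVec, M2_mulVec] at hcoord
  have hx0' : x 0 = 0 := by simpa [h2, h3, hq0] using hcoord 3
  have hx1' : x 1 = 0 := by simpa [h2, h3, hx0'] using (hcoord 2).symm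
  exact hx0 (funext fun i ↦ by fin_cases i <;> simp [hx0', hx1', h2, h3, h4, h5])

theorem roots_charpoly_sigma1_le (hW : RhoInvariant q l W) (hq : q ^ 2 + q + 1 = 0) (hl : l ≠ 0)
    (hdim : Module.finrank ℂ W = 2) :
    hW.sigma1.charpoly.roots ≤ {l⁻¹, q ^ 2, q ^ 2, 1} := by
  let tail : W →ₗ[ℂ] Fin 4 → ℂ := LinearMap.funLeft ℂ ℂ (Fin.natAdd 2) ∘ₗ W.subtype
  let B : Matrix (Fin 4) (Fin 4) ℂ := (M1 q l).submatrix (Fin.natAdd 2) (Fin.natAdd 2)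
  have htail : Function.Injective tail := by
    rw [injective_iff_map_eq_zero]
    intro x hx
    exact Subtype.ext (hW.eq_zero_of_mem_of_tail_eq_zero hq hl hdim x.2
      (congrFun hx 0) (congrFun hx 1) (congrFun hx 2) (congrFun hx 3))
  have hcomm : ∀ x, tail (hW.sigma1 x) = B.mulVecLin (tail x) := by
    intro x
    ext i
    change (M1 q l *ᵥ x) (Fin.natAdd 2 i) = (B *ᵥ fun j ↦ (x : Fin 6 → ℂ) (Fin.natAdd 2 j)) i
    fin_cases i <;> simp [B, M1, Matrix.mulVec, dotProduct, Fin.sum_univ_succ]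
  have hB : B.IsUpperTriangular := by
    intro i j hij
    fin_cases i <;> fin_cases j <;> simp_all [B, M1]
  have hroots : B.charpoly.roots = {l⁻¹, q ^ 2, q ^ 2, 1} := by
    have hdiag : B.diag = ![q ^ 2, q ^ 2, l⁻¹, 1] := by
      ext i
      fin_cases i <;> simp [B, M1]
    rw [roots_charpoly_of_isUpperTriangular hB, hdiag]
    change q ^ 2 ::ₘ q ^ 2 ::ₘ l⁻¹ ::ₘ {1} = l⁻¹ ::ₘ q ^ 2 ::ₘ q ^ 2 ::ₘ {1}
    rw [Multiset.cons_swap _ l⁻¹, Multiset.cons_swap _ l⁻¹]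
  rw [← hroots, ← Matrix.charpoly_mulVecLin]
  exact roots.le_of_dvd (LinearMap.charpoly_monic _).ne_zero
    (charpoly_dvd_charpoly_of_injective htail hcomm)

theorem exists_eigenvalues_sigma1 (hW : RhoInvariant q l W) (hq : q ^ 2 + q + 1 = 0) (hl : l ≠ 0)
    (hdim : Module.finrank ℂ W = 2) :
    ∃ α β : ℂ, hW.sigma1.HasEigenvalue α ∧ LinearMap.det hW.sigma1 = α * β ∧
      α ^ 3 = 1 ∧ (β = l⁻¹ ∨ β ^ 3 = 1) := by
  have hsplits := IsAlgClosed.splits hW.sigma1.charpoly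
  have hdet := Module.End.det_eq_prod_roots_charpoly_of_splits hsplits
  have hle := hW.roots_charpoly_sigma1_le hq hl hdim
  obtain ⟨x, y, hxy⟩ := Multiset.card_eq_two.mp <|
    hsplits.natDegree_eq_card_roots.symm.trans (hW.sigma1.charpoly_natDegree.trans hdim)
  have heig : ∀ z ∈ hW.sigma1.charpoly.roots, hW.sigma1.HasEigenvalue z := fun z hz ↦
    (Module.End.hasEigenvalue_iff_isRoot_charpoly _ _).mpr (isRoot_of_mem_roots hz)
  have hcube : ∀ z ∈ ({q ^ 2, q ^ 2, 1} : Multiset ℂ), z ^ 3 = 1 := by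
    simp only [Multiset.insert_eq_cons, Multiset.mem_cons, Multiset.mem_singleton]
    grind
  rw [hxy] at hle hdet heig
  by_cases hx : x = l⁻¹
  · have hy : {y} ≤ ({q ^ 2, q ^ 2, 1} : Multiset ℂ) :=
      (Multiset.cons_le_cons_iff l⁻¹).mp (hx ▸ hle)
    exact ⟨y, x, heig y (by simp), by simp [hdet, mul_comm],
      hcube y (Multiset.singleton_le.mp hy), Or.inl hx⟩
  · have hmem : ∀ z ∈ ({x, y} : Multiset ℂ), z = l⁻¹ ∨ z ^ 3 = 1 := fun z hz ↦
      (Multiset.mem_cons.mp (Multiset.mem_of_le hle hz)).imp_right (hcube z)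
    exact ⟨x, y, heig x (by simp), by simp [hdet], (hmem x (by simp)).resolve_left hx,
      hmem y (by simp)⟩

theorem pow_three_eq (hW : RhoInvariant q l W) (hq : q ^ 2 + q + 1 = 0) (hl : l ≠ 0)
    (hdim : Module.finrank ℂ W = 2) : l ^ 3 = q := by
  obtain ⟨α, β, hα, hdet, hα3, hβ⟩ := hW.exists_eigenvalues_sigma1 hq hl hdim
  have hc : -q ^ 2 ≠ 0 := by grind
  rcases det_pow_three_eq_or_pow_six_eq_of_braid hdim hc (hW.sigma_braid hq hl)
    (hW.sigma_twist_mul_self hq hl) with hdet3 | hpow6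
  · rw [hdet, mul_pow, hα3] at hdet3
    rcases hβ with rfl | hβ3 <;> grind
  · obtain ⟨v, hv⟩ := hα.exists_hasEigenvector
    have hα6 : α ^ 6 = -q ^ 2 := by
      have h := hv.pow_apply 6
      rw [hpow6] at h
      exact (smul_left_injective ℂ hv.2 h).symm
    grind

end RhoInvariant

section Existence

/-- The plane that is invariant when `q = l ^ 3` is a primitive cube root of unity: the span of an
eigenvector of `M1` for `l⁻¹` and its image under `M2`, written with `l ^ 9 = 1`. -/
noncomputable def invariantPlane (l : ℂ) : Submodule ℂ (Fin 6 → ℂ) :=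
  Submodule.span ℂ {![0, 1, 0, l ^ 8, 1 - l ^ 2, 0], ![0, l ^ 8, 1, l ^ 5, l ^ 6, 0]}

theorem finrank_invariantPlane (l : ℂ) : Module.finrank ℂ (invariantPlane l) = 2 := by
  have hindep : LinearIndependent ℂ
      ![![0, 1, 0, l ^ 8, 1 - l ^ 2, 0], ![0, l ^ 8, 1, l ^ 5, l ^ 6, 0]] := by
    rw [LinearIndependent.pair_iff]
    intro s t hst
    have ht : t = 0 := by simpa using congrFun hst 2
    have hs : s = 0 := by simpa [ht] using congrFun hst 1
    exact ⟨hs, ht⟩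
  have h := finrank_span_eq_card hindep
  rwa [Matrix.range_cons_cons_empty, Fintype.card_fin] at h

theorem rhoInvariant_invariantPlane {l : ℂ} (hl : l ^ 6 + l ^ 3 + 1 = 0) :
    RhoInvariant (l ^ 3) l (invariantPlane l) := by
  have hinv : l⁻¹ = l ^ 8 := by grind
  refine ⟨mulVec_mem_span_pair _ (Submodule.mem_span_pair.mpr ⟨l ^ 8, 0, ?_⟩)
      (Submodule.mem_span_pair.mpr ⟨-l ^ 3, l ^ 6, ?_⟩),
    mulVec_mem_span_pair _ (Submodule.mem_span_pair.mpr ⟨0, 1, ?_⟩)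
      (Submodule.mem_span_pair.mpr ⟨-l ^ 5, l ^ 6 + l ^ 8, ?_⟩)⟩
  all_goals
    simp only [M1_mulVec, M2_mulVec]
    ext i
    fin_cases i <;> simp [div_eq_mul_inv, hinv] <;> grind

end Existence

theorem stmt5_general (q l : ℂ) (hq3 : q ^ 3 = 1) (hq1 : q ≠ 1) (hl0 : l ≠ 0) :
    (¬ ∃ W : Submodule ℂ (Fin 6 → ℂ), RhoInvariant q l W ∧ Module.finrank ℂ W = 2) ↔
      l ^ 3 ≠ q := by
  have hq : q ^ 2 + q + 1 = 0 := by grind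
  rw [not_iff_not]
  constructor
  · rintro ⟨W, hW, hdim⟩
    exact hW.pow_three_eq hq hl0 hdim
  · rintro rfl
    exact ⟨invariantPlane l, rhoInvariant_invariantPlane (by linear_combination hq),
      finrank_invariantPlane l⟩

theorem stmt5 (q l : ℂ) (hq3 : q^3 = 1) (hq1 : q ≠ 1) (hl0 : l ≠ 0)
    (hm1 : l ≠ -1) (h1 : l ≠ 1) (hq : l ≠ q) (hq2 : l ≠ q^2) :
    (¬ ∃ W : Submodule ℂ (Fin 6 → ℂ), RhoInvariant q l W ∧ Module.finrank ℂ W = 2) ↔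
      l^3 ≠ q :=
  stmt5_general q l hq3 hq1 hl0
end

section
/- (Proposition 3.3) There is no ρ-invariant subspace of ℂ⁶ of dimension 3 if and only if λ₁² ≠ −q and λ₁² ≠ −q². -/
open Matrix Polynomial

/-! For generic parameters the eigenvalues `q`, `l`, `l⁻¹`, `1` of `M1` are simple. Hence an
invariant subspace `W` contains the corresponding right eigenvector as soon as the left
eigenvector, viewed as a linear form, does not vanish on `W`. Pairing left eigenvectors with
images under `M2` shows that `eigvecL ∈ W` implies `eigvecOne ∈ W`, and that `eigvecOne ∈ W`
implies `eigvecQ ∈ W` unless the pairing `q ^ 2 * (l ^ 2 + q) * (l ^ 2 + q ^ 2)` vanishes. Away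
from its zeros, dimension three is skipped: if `eigvecQ ∈ W` then `W` contains four independent
vectors, and otherwise the left eigenvectors for `q`, `l` and `1` vanish on `W`, as does the last
of these after applying `M2`, which leaves dimension at most two. When `l ^ 2 = -q` the vector
`eigvecL` generates an invariant subspace of dimension three, and the case `l ^ 2 = -q ^ 2`
reduces to it because the representations with parameters `l` and `l⁻¹` are isomorphic. -/

section SimpleEigenvalue

variable {R M : Type*} [CommRing R] [AddCommGroup M] [Module R M] {f : Module.End R M}

lemma aeval_apply_mem_of_forall_mem {W : Submodule R M} (hW : ∀ x ∈ W, f x ∈ W) (p : R[X])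
    {x : M} (hx : x ∈ W) : aeval f p x ∈ W := by
  induction p using Polynomial.induction_on generalizing x with
  | C a => simpa using W.smul_mem a hx
  | add p r hp hr => simpa using W.add_mem (hp hx) (hr hx)
  | monomial n a ih => simpa [pow_succ] using ih (hW x hx)

lemma dual_aeval_apply {φ : Module.Dual R M} {μ : R} (hφ : ∀ x, φ (f x) = μ * φ x) (p : R[X])
    (x : M) : φ (aeval f p x) = p.eval μ * φ x := by
  induction p using Polynomial.induction_on generalizing x with
  | C a => simp
  | add p r hp hr => simp [hp, hr, add_mul]
  | monomial n a ih => simpa [pow_succ, hφ, mul_assoc] using ih (f x)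

/- Writing the characteristic polynomial as `(X - μ) * p`, the vector `p(f) x` is a `μ`-eigenvector
in `W`, and it is nonzero because `φ (p(f) x) = p(μ) * φ x`. -/
theorem mem_of_rootMultiplicity_charpoly_eq_one {K V : Type*} [Field K] [AddCommGroup V]
    [Module K V] [FiniteDimensional K V] {f : Module.End K V} {W : Submodule K V}
    (hW : ∀ x ∈ W, f x ∈ W) {μ : K} (hμ : f.charpoly.rootMultiplicity μ = 1)
    {v : V} (hv : f v = μ • v) {φ : Module.Dual K V} (hφ : ∀ x, φ (f x) = μ * φ x)
    {x : V} (hx : x ∈ W) (hφx : φ x ≠ 0) : v ∈ W := by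
  obtain ⟨p, hp, hpμ⟩ := f.charpoly.exists_eq_pow_rootMultiplicity_mul_and_not_dvd
    f.charpoly_monic.ne_zero μ
  rw [hμ, pow_one] at hp
  rw [dvd_iff_isRoot, IsRoot.def] at hpμ
  set y := aeval f p x
  have hyW : y ∈ W := aeval_apply_mem_of_forall_mem hW p hx
  have hy : y ∈ f.eigenspace μ := by
    have h := LinearMap.congr_fun f.aeval_self_charpoly x
    rw [hp] at h
    rw [Module.End.mem_eigenspace_iff, ← sub_eq_zero]
    simpa using h
  have hy0 : y ≠ 0 := by
    intro h
    have hφy : φ y = p.eval μ * φ x := dual_aeval_apply hφ p x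
    rw [h, map_zero] at hφy
    exact mul_ne_zero hpμ hφx hφy.symm
  have hspan : K ∙ y = f.eigenspace μ := by
    refine Submodule.eq_of_le_of_finrank_le (by simpa using hy) ?_
    rw [finrank_span_singleton hy0, ← hμ]
    exact f.finrank_eigenspace_le μ
  have hvy : v ∈ K ∙ y := hspan ▸ Module.End.mem_eigenspace_iff.2 hv
  exact (Submodule.span_singleton_le_iff_mem y W).2 hyW hvy

end SimpleEigenvalue

section Matrix

variable {m n R : Type*} [Fintype m] [Fintype n] [CommRing R]

lemma rootMultiplicity_charpoly_of_isUpperTriangular [IsDomain R] [LinearOrder n] {A : Matrix n n R}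
    (hA : A.IsUpperTriangular) {k : n} (hk : ∀ i ≠ k, A i i ≠ A k k) :
    A.charpoly.rootMultiplicity (A k k) = 1 := by
  classical
  have hdiag : Finset.univ.filter (fun i => A k k = A i i) = {k} := by
    ext i
    by_cases hik : i = k
    · simp [hik]
    · simp [hik, (hk i hik).symm]
  rw [charpoly_of_isUpperTriangular A hA, ← count_roots,
    roots_prod _ _ (Finset.prod_ne_zero_iff.2 fun i _ => X_sub_C_ne_zero _)]
  simp only [roots_X_sub_C, Multiset.bind_singleton, Multiset.count_map]
  exact congrArg Finset.card hdiag

lemma finrank_range_mulVecLin_of_mul_eq_one [Nontrivial R] [DecidableEq n] {L : Matrix n m R}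
    {N : Matrix m n R} (h : L * N = 1) :
    Module.finrank R (LinearMap.range N.mulVecLin) = Fintype.card n := by
  have hinj : Function.Injective N.mulVecLin :=
    Function.LeftInverse.injective (g := L.mulVecLin) fun x => by simp [h]
  rw [LinearMap.finrank_range_of_inj hinj, Module.finrank_fintype_fun_eq_card]

lemma mulVec_mem_range_mulVecLin_of_mul_eq {A : Matrix m m R} {N : Matrix m n R}
    {X : Matrix n n R} (h : A * N = N * X) {x : m → R} (hx : x ∈ LinearMap.range N.mulVecLin) :
    A *ᵥ x ∈ LinearMap.range N.mulVecLin := by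
  obtain ⟨y, rfl⟩ := hx
  exact ⟨X *ᵥ y, by simp [h]⟩

lemma mulVec_mem_map_mulVecLin_of_mul_eq {A : Matrix m m R} {B : Matrix n n R} {T : Matrix m n R}
    (h : A * T = T * B) {W : Submodule R (n → R)} (hW : ∀ x ∈ W, B *ᵥ x ∈ W)
    {x : m → R} (hx : x ∈ W.map T.mulVecLin) : A *ᵥ x ∈ W.map T.mulVecLin := by
  obtain ⟨y, hy, rfl⟩ := hx
  exact ⟨B *ᵥ y, hW y hy, by simp [h]⟩

end Matrix

/-- The representation is generic when `q` is a primitive cube root of unity and `M1` is invertible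
with its eigenvalues `q, l, l⁻¹, 1` simple. -/
structure IsGeneric (q l : ℂ) : Prop where
  sq_add_self_add_one : q ^ 2 + q + 1 = 0
  ne_zero : l ≠ 0
  ne_neg_one : l ≠ -1
  ne_one : l ≠ 1
  ne_q : l ≠ q
  ne_q_sq : l ≠ q ^ 2

variable {q l : ℂ}

lemma IsGeneric.q_ne_zero (h : IsGeneric q l) : q ≠ 0 := by
  rintro rfl
  simpa using h.sq_add_self_add_one

/-- A right eigenvector of `M1` for the eigenvalue `q`. -/
def eigvecQ : Fin 6 → ℂ := ![1, 0, 0, 0, 0, 0]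

/-- A right eigenvector of `M1` for the eigenvalue `l`, scaled to be polynomial in `q` and `l`. -/
noncomputable def eigvecL (q l : ℂ) : Fin 6 → ℂ := ![-q ^ 2 * l, l - q, 0, 0, 0, 0]

/-- A right eigenvector of `M1` for the eigenvalue `l⁻¹`, scaled to be polynomial in `q` and `l`. -/
noncomputable def eigvecInv (q l : ℂ) : Fin 6 → ℂ :=
  ![-q * (l ^ 3 - q), -(l - q) * (l - q ^ 2), 0, (l ^ 2 - 1) * (l - q ^ 2),
    (l ^ 2 - 1) * (l - q) * (l - q ^ 2), 0]

/-- A right eigenvector of `M1` for the eigenvalue `1`, scaled to be polynomial in `q` and `l`. -/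
noncomputable def eigvecOne (q l : ℂ) : Fin 6 → ℂ :=
  ![-q * (l + q) * (l + q ^ 2), -(l - q ^ 2), (l - 1) ^ 2, (l - 1) * (l + q),
    (1 - q ^ 2) * (l - 1) * l, (1 - q ^ 2) * (l - 1) ^ 2]

/-- A left eigenvector of `M1` for the eigenvalue `q`, scaled to be polynomial in `q` and `l`. -/
noncomputable def leftEigvecQ (q l : ℂ) : Fin 6 → ℂ :=
  ![-(1 - q ^ 2) * (l - q) * (l - q ^ 2), (q - q ^ 2) * (l - q ^ 2) * l,
    -q * (l + 1) * (l - q ^ 2), (l - q) * (l - q ^ 2), -q * (l - 1), q * l]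

/-- A left eigenvector of `M1` for the eigenvalue `l`, scaled to be polynomial in `q` and `l`. -/
noncomputable def leftEigvecL (q l : ℂ) : Fin 6 → ℂ :=
  ![0, (l - 1) ^ 2 * (l + 1) * (l - q ^ 2), (l - 1) ^ 2 * (l + 1) * q ^ 2, 0,
    (l - 1) * (l - q ^ 2), l ^ 3 - q ^ 2]

lemma M1_isUpperTriangular : (M1 q l).IsUpperTriangular := by
  intro i j hij
  fin_cases i <;> fin_cases j <;> first | rfl | exact absurd hij (by decide)

lemma M1_diag_ne (h : IsGeneric q l) {k : Fin 6} (hk2 : k ≠ 2) (hk3 : k ≠ 3) :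
    ∀ i ≠ k, M1 q l i i ≠ M1 q l k k := by
  have hq0 := h.q_ne_zero
  obtain ⟨hq, h0, hm1, h1, hlq, hlq2⟩ := h
  have hq1 : q ≠ 1 := by grind
  intro i hik
  fin_cases i <;> fin_cases k <;> simp [M1] at hik hk2 hk3 ⊢ <;> grind

namespace RhoInvariant

variable {W : Submodule ℂ (Fin 6 → ℂ)}

lemma eigvec_mem (hW : RhoInvariant q l W) (h : IsGeneric q l) {k : Fin 6} (hk2 : k ≠ 2)
    (hk3 : k ≠ 3) {v φ : Fin 6 → ℂ} (hv : M1 q l *ᵥ v = M1 q l k k • v)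
    (hφ : φ ᵥ* M1 q l = M1 q l k k • φ) {x : Fin 6 → ℂ} (hx : x ∈ W) (hφx : φ ⬝ᵥ x ≠ 0) :
    v ∈ W := by
  refine mem_of_rootMultiplicity_charpoly_eq_one (f := (M1 q l).toLin') (μ := M1 q l k k)
    (φ := dotProductBilin ℂ ℂ φ) hW.1 ?_ hv ?_ hx hφx
  · rw [charpoly_toLin']
    exact rootMultiplicity_charpoly_of_isUpperTriangular M1_isUpperTriangular
      (M1_diag_ne h hk2 hk3)
  · intro y
    simp [dotProduct_mulVec, hφ]

lemma eigvecQ_mem (hW : RhoInvariant q l W) (h : IsGeneric q l) {x : Fin 6 → ℂ} (hx : x ∈ W)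
    (hφ : leftEigvecQ q l ⬝ᵥ x ≠ 0) : eigvecQ ∈ W := by
  have hq := h.sq_add_self_add_one
  have h0 := h.ne_zero
  refine hW.eigvec_mem h (k := 0) (by decide) (by decide) ?_ ?_ hx hφ
  · ext i
    fin_cases i <;> simp [M1, eigvecQ]
  · ext i
    fin_cases i <;> simp [M1, leftEigvecQ, vecMul, dotProduct, Fin.sum_univ_six] <;> grind

lemma eigvecL_mem (hW : RhoInvariant q l W) (h : IsGeneric q l) {x : Fin 6 → ℂ} (hx : x ∈ W)
    (hφ : leftEigvecL q l ⬝ᵥ x ≠ 0) : eigvecL q l ∈ W := by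
  have hq := h.sq_add_self_add_one
  have h0 := h.ne_zero
  refine hW.eigvec_mem h (k := 1) (by decide) (by decide) ?_ ?_ hx hφ
  · ext i
    fin_cases i <;> simp [M1, eigvecL] <;> grind
  · ext i
    fin_cases i <;> simp [M1, leftEigvecL, vecMul, dotProduct, Fin.sum_univ_six] <;> grind

lemma eigvecInv_mem (hW : RhoInvariant q l W) (h : IsGeneric q l) {x : Fin 6 → ℂ} (hx : x ∈ W)
    (hφ : (l - 1) * x 4 - l * x 5 ≠ 0) : eigvecInv q l ∈ W := by
  have hq := h.sq_add_self_add_one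
  have h0 := h.ne_zero
  refine hW.eigvec_mem h (k := 4) (φ := ![0, 0, 0, 0, l - 1, -l]) (by decide) (by decide)
    ?_ ?_ hx (by simpa [dotProduct, Fin.sum_univ_six, sub_eq_add_neg] using hφ)
  · ext i
    fin_cases i <;> simp [M1, eigvecInv] <;> grind
  · ext i
    fin_cases i <;> simp [M1, vecMul, dotProduct, Fin.sum_univ_six] <;> grind

lemma eigvecOne_mem (hW : RhoInvariant q l W) (h : IsGeneric q l) {x : Fin 6 → ℂ} (hx : x ∈ W)
    (hφ : x 5 ≠ 0) : eigvecOne q l ∈ W := by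
  have hq := h.sq_add_self_add_one
  have h0 := h.ne_zero
  refine hW.eigvec_mem h (k := 5) (φ := Pi.single 5 1) (by decide) (by decide) ?_ ?_ hx
    (by simpa using hφ)
  · ext i
    fin_cases i <;> simp [M1, eigvecOne] <;> grind
  · ext i
    fin_cases i <;> simp [M1]

end RhoInvariant

/-- An intertwiner between the representations with parameters `l⁻¹` and `l`, found by solving
`M1 q l * T = T * M1 q l⁻¹` and `M2 q l * T = T * M2 q l⁻¹`. -/
noncomputable def intertwiner (q l : ℂ) : Matrix (Fin 6) (Fin 6) ℂ :=
  !![l ^ 3 - q, 0, 0, 0, 0, 0;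
     0, l - q, 0, q * (l ^ 2 - 1), (l ^ 2 - 1) * (l - q), 0;
     0, 0, l * (1 - q * l), q * (l ^ 2 - 1) * (1 - q * l), -q * l * (l ^ 2 - 1), 0;
     0, 1 - l ^ 2, (l ^ 2 - 1) * (l - q ^ 2), l * (1 - q * l), 0, 0;
     0, -(l ^ 2 - 1) * (l - q), l * (l ^ 2 - 1), 0, l ^ 2 * (l - q), 0;
     0, 0, 0, 0, 0, l ^ 3 - q]

lemma M1_mul_intertwiner (hq : q ^ 2 + q + 1 = 0) (h0 : l ≠ 0) :
    M1 q l * intertwiner q l = intertwiner q l * M1 q l⁻¹ := by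
  ext i j
  fin_cases i <;> fin_cases j <;>
    simp [M1, intertwiner, Matrix.mul_apply, Fin.sum_univ_six] <;> grind

lemma M2_mul_intertwiner (hq : q ^ 2 + q + 1 = 0) (h0 : l ≠ 0) :
    M2 q l * intertwiner q l = intertwiner q l * M2 q l⁻¹ := by
  ext i j
  fin_cases i <;> fin_cases j <;>
    simp [M2, intertwiner, Matrix.mul_apply, Fin.sum_univ_six] <;> grind

lemma intertwiner_inv_mul_intertwiner (hq : q ^ 2 + q + 1 = 0) (h0 : l ≠ 0) :
    intertwiner q l⁻¹ * intertwiner q l = ((l ^ 3 - q) * (l⁻¹ ^ 3 - q)) • 1 := by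
  ext i j
  fin_cases i <;> fin_cases j <;>
    simp [intertwiner, Matrix.mul_apply, Fin.sum_univ_six] <;> grind

lemma exists_rhoInvariant_of_inv (hq : q ^ 2 + q + 1 = 0) (h0 : l ≠ 0)
    (hT : (l ^ 3 - q) * (l⁻¹ ^ 3 - q) ≠ 0) {d : ℕ}
    (h : ∃ W, RhoInvariant q l⁻¹ W ∧ Module.finrank ℂ W = d) :
    ∃ W, RhoInvariant q l W ∧ Module.finrank ℂ W = d := by
  obtain ⟨W, hW, hd⟩ := h
  have hinj : Function.Injective (intertwiner q l).mulVecLin := by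
    intro x y hxy
    have hxy' := congrArg (intertwiner q l⁻¹ *ᵥ ·) hxy
    simp only [mulVecLin_apply, mulVec_mulVec, intertwiner_inv_mul_intertwiner hq h0, smul_mulVec,
      one_mulVec] at hxy'
    exact smul_right_injective _ hT hxy'
  refine ⟨W.map (intertwiner q l).mulVecLin, ⟨?_, ?_⟩, ?_⟩
  · exact fun x => mulVec_mem_map_mulVecLin_of_mul_eq (M1_mul_intertwiner hq h0) hW.1
  · exact fun x => mulVec_mem_map_mulVecLin_of_mul_eq (M2_mul_intertwiner hq h0) hW.2
  · rw [← hd]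
    exact (Submodule.equivMapOfInjective _ hinj W).finrank_eq.symm

/- The subspace is the one generated by `eigvecL`, of which the first column of `N` is a multiple;
`L` picks out three coordinates on which `N` is the identity. -/
lemma exists_rhoInvariant_of_sq_eq_neg (hq : q ^ 2 + q + 1 = 0) (hl : l ^ 2 = -q) :
    ∃ W, RhoInvariant q l W ∧ Module.finrank ℂ W = 3 := by
  have hinv : l⁻¹ = -q ^ 2 * l := inv_eq_of_mul_eq_one_right (by grind)
  let N : Matrix (Fin 6) (Fin 3) ℂ :=
    !![1 - l, 0, 0; 1, 0, 0; 0, 1, 0; 0, -l, 0; 0, 0, 1; 0, 0, 1 + q ^ 2 * l]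
  let X : Matrix (Fin 3) (Fin 3) ℂ := !![l, q ^ 2, 1; 0, q ^ 2, 1 + q ^ 2 * l; 0, 0, 1]
  let Y : Matrix (Fin 3) (Fin 3) ℂ := !![1, 0, 0; -q ^ 2 - q * l, q ^ 2, 0; q, -q, l]
  let L : Matrix (Fin 3) (Fin 6) ℂ := !![0, 1, 0, 0, 0, 0; 0, 0, 1, 0, 0, 0; 0, 0, 0, 0, 1, 0]
  have hX : M1 q l * N = N * X := by
    ext i j
    fin_cases i <;> fin_cases j <;>
      simp [N, X, M1, Matrix.mul_apply, Fin.sum_univ_succ, div_eq_mul_inv, hinv] <;> grind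
  have hY : M2 q l * N = N * Y := by
    ext i j
    fin_cases i <;> fin_cases j <;>
      simp [N, Y, M2, Matrix.mul_apply, Fin.sum_univ_succ, div_eq_mul_inv, hinv] <;> grind
  have hL : L * N = 1 := by
    ext i j
    fin_cases i <;> fin_cases j <;> simp [L, N, Matrix.mul_apply, Fin.sum_univ_succ]
  exact ⟨LinearMap.range N.mulVecLin,
    ⟨fun _ => mulVec_mem_range_mulVecLin_of_mul_eq hX,
      fun _ => mulVec_mem_range_mulVecLin_of_mul_eq hY⟩,
    finrank_range_mulVecLin_of_mul_eq_one hL⟩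

lemma exists_rhoInvariant_of_sq_eq_neg_sq (hq : q ^ 2 + q + 1 = 0) (hl : l ^ 2 = -q ^ 2) :
    ∃ W, RhoInvariant q l W ∧ Module.finrank ℂ W = 3 := by
  have h0 : l ≠ 0 := by grind
  have hinv : l⁻¹ = -q * l := inv_eq_of_mul_eq_one_right (by grind)
  have hT : (l ^ 3 - q) * (l⁻¹ ^ 3 - q) = -q := by grind
  refine exists_rhoInvariant_of_inv hq h0 (by rw [hT]; grind) ?_
  exact exists_rhoInvariant_of_sq_eq_neg hq (by grind)

lemma M2_mulVec_eigvecQ : M2 q l *ᵥ eigvecQ = ![1, -1 / l, q, -q ^ 2, l, -1] := by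
  ext i
  fin_cases i <;> simp [M2, eigvecQ]

lemma linearIndependent_eigvecQ_M2_eigvecQ_eigvecOne_eigvecInv (h : IsGeneric q l) :
    LinearIndependent ℂ ![eigvecQ, M2 q l *ᵥ eigvecQ, eigvecOne q l, eigvecInv q l] := by
  have hq0 := h.q_ne_zero
  obtain ⟨hq, -, hm1, h1, hlq, hlq2⟩ := h
  rw [M2_mulVec_eigvecQ, Fintype.linearIndependent_iff]
  intro g hg
  have hcoord (i : Fin 6) := congrFun hg i
  simp only [Fin.sum_univ_four, cons_val, eigvecQ, eigvecOne, eigvecInv, Pi.add_apply,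
    Pi.smul_apply, Pi.zero_apply, smul_eq_mul] at hcoord
  have c0 := hcoord 0
  have c2 := hcoord 2
  have c4 := hcoord 4
  have c5 := hcoord 5
  simp only [cons_val] at c0 c2 c4 c5
  have hg2 : q * (l - 1) ^ 2 * g 2 = 0 := by
    linear_combination c2 + q * c5 + (q - 1) * (l - 1) ^ 2 * g 2 * hq
  have g2 : g 2 = 0 := by simpa [sub_eq_zero, hq0, h1] using hg2
  have g1 : g 1 = 0 := by linear_combination (1 - q ^ 2) * (l - 1) ^ 2 * g2 - c5
  have hg3 : (l - 1) * (l + 1) * (l - q) * (l - q ^ 2) * g 3 = 0 := by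
    linear_combination c4 - l * g1 - (1 - q ^ 2) * (l - 1) * l * g2
  have g3 : g 3 = 0 := by
    simpa [sub_eq_zero, add_eq_zero_iff_eq_neg, h1, hm1, hlq, hlq2] using hg3
  have g0 : g 0 = 0 := by simpa [g1, g2, g3] using c0
  intro i
  fin_cases i <;> assumption

lemma eq_zero_of_leftEigvec_dotProduct_eq_zero (h : IsGeneric q l) {x : Fin 6 → ℂ}
    (x2 : x 2 = 0) (x4 : x 4 = 0) (x5 : x 5 = 0) (hφL : leftEigvecL q l ⬝ᵥ x = 0)
    (hφQ : leftEigvecQ q l ⬝ᵥ x = 0) (hM2 : (M2 q l *ᵥ x) 5 = 0) : x = 0 := by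
  have hq0 := h.q_ne_zero
  obtain ⟨-, -, hm1, h1, hlq, hlq2⟩ := h
  have x1 : x 1 = 0 := by
    simpa [leftEigvecL, dotProduct, Fin.sum_univ_six, x2, x4, x5, sub_eq_zero, h1, hlq2,
      add_eq_zero_iff_eq_neg, hm1] using hφL
  have x3 : x 3 = x 0 := by
    simp only [M2, mulVec, of_apply, dotProduct, Fin.sum_univ_six, cons_val, x1, x2, x4, x5] at hM2
    linear_combination hM2
  have x0 : x 0 = 0 := by
    simp only [leftEigvecQ, dotProduct, Fin.sum_univ_six, cons_val, x1, x2, x3, x4, x5] at hφQ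
    have hx0 : q ^ 2 * (l - q) * (l - q ^ 2) * x 0 = 0 := by linear_combination hφQ
    simpa [sub_eq_zero, hq0, hlq, hlq2] using hx0
  ext i
  fin_cases i <;> simp [x0, x1, x2, x3, x4, x5]

namespace RhoInvariant

variable {W : Submodule ℂ (Fin 6 → ℂ)}

lemma eigvecOne_mem_of_eigvecL_mem (hW : RhoInvariant q l W) (h : IsGeneric q l)
    (hL : eigvecL q l ∈ W) : eigvecOne q l ∈ W := by
  have hq := h.sq_add_self_add_one
  have h5 : (M2 q l *ᵥ eigvecL q l) 5 = 1 := by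
    simp only [M2, eigvecL, mulVec, of_apply, dotProduct, Fin.sum_univ_six, cons_val]
    linear_combination (q - 1) * hq
  exact hW.eigvecOne_mem h (hW.2 _ hL) (by simp [h5])

lemma eigvecQ_mem_of_eigvecOne_mem (hW : RhoInvariant q l W) (h : IsGeneric q l)
    (hl : l ^ 2 ≠ -q) (hl' : l ^ 2 ≠ -q ^ 2) (hOne : eigvecOne q l ∈ W) : eigvecQ ∈ W := by
  have hq := h.sq_add_self_add_one
  have h0 := h.ne_zero
  have hφ : leftEigvecQ q l ⬝ᵥ M2 q l *ᵥ eigvecOne q l =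
      q ^ 2 * (l ^ 2 + q) * (l ^ 2 + q ^ 2) := by
    simp only [M2, eigvecOne, leftEigvecQ, mulVec, of_apply, dotProduct, Fin.sum_univ_six, cons_val]
    field_simp
    grind
  have hne : q ^ 2 * (l ^ 2 + q) * (l ^ 2 + q ^ 2) ≠ 0 := by grind
  exact hW.eigvecQ_mem h (hW.2 _ hOne) (hφ ▸ hne)

lemma four_le_finrank_of_eigvecQ_mem (hW : RhoInvariant q l W) (h : IsGeneric q l)
    (hQ : eigvecQ ∈ W) : 4 ≤ Module.finrank ℂ W := by
  have hy : M2 q l *ᵥ eigvecQ ∈ W := hW.2 _ hQ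
  have hOne : eigvecOne q l ∈ W := hW.eigvecOne_mem h hy (by simp [M2_mulVec_eigvecQ])
  have hInv : eigvecInv q l ∈ W := by
    have hφ : (l - 1) * l - l * -1 = l ^ 2 := by ring
    refine hW.eigvecInv_mem h hy ?_
    simpa only [M2_mulVec_eigvecQ, cons_val, hφ] using pow_ne_zero 2 h.ne_zero
  have hspan : Submodule.span ℂ
      (Set.range ![eigvecQ, M2 q l *ᵥ eigvecQ, eigvecOne q l, eigvecInv q l]) ≤ W := by
    rw [Submodule.span_le, Set.range_subset_iff]
    intro i
    fin_cases i <;> assumption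
  calc
    4 = _ := (finrank_span_eq_card
      (linearIndependent_eigvecQ_M2_eigvecQ_eigvecOne_eigvecInv h)).symm
    _ ≤ Module.finrank ℂ W := Submodule.finrank_mono hspan

lemma finrank_le_two_of_eigvecQ_notMem (hW : RhoInvariant q l W) (h : IsGeneric q l)
    (hl : l ^ 2 ≠ -q) (hl' : l ^ 2 ≠ -q ^ 2) (hQ : eigvecQ ∉ W) : Module.finrank ℂ W ≤ 2 := by
  have hOne : eigvecOne q l ∉ W := mt (hW.eigvecQ_mem_of_eigvecOne_mem h hl hl') hQ
  have hL : eigvecL q l ∉ W := mt (hW.eigvecOne_mem_of_eigvecL_mem h) hOne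
  have hφOne : ∀ x ∈ W, x 5 = 0 := fun x hx => not_not.1 (mt (hW.eigvecOne_mem h hx) hOne)
  have hφL : ∀ x ∈ W, leftEigvecL q l ⬝ᵥ x = 0 := fun x hx =>
    not_not.1 (mt (hW.eigvecL_mem h hx) hL)
  have hφQ : ∀ x ∈ W, leftEigvecQ q l ⬝ᵥ x = 0 := fun x hx =>
    not_not.1 (mt (hW.eigvecQ_mem h hx) hQ)
  let π : W →ₗ[ℂ] (Fin 2 → ℂ) := LinearMap.funLeft ℂ ℂ ![2, 4] ∘ₗ W.subtype
  have hπ : Function.Injective π := by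
    rw [injective_iff_map_eq_zero]
    rintro ⟨x, hx⟩ hπx
    exact Subtype.ext (eq_zero_of_leftEigvec_dotProduct_eq_zero h (congrFun hπx 0) (congrFun hπx 1)
      (hφOne x hx) (hφL x hx) (hφQ x hx) (hφOne _ (hW.2 x hx)))
  simpa using LinearMap.finrank_le_finrank_of_injective hπ

end RhoInvariant

theorem stmt7 (q l : ℂ) (hq3 : q^3 = 1) (hq1 : q ≠ 1) (hl0 : l ≠ 0)
    (hm1 : l ≠ -1) (h1 : l ≠ 1) (hq : l ≠ q) (hq2 : l ≠ q^2) :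
    (¬ ∃ W : Submodule ℂ (Fin 6 → ℂ), RhoInvariant q l W ∧ Module.finrank ℂ W = 3) ↔
      (l^2 ≠ -q ∧ l^2 ≠ -q^2) := by
  have hqq : q ^ 2 + q + 1 = 0 := by
    have hmul : (q - 1) * (q ^ 2 + q + 1) = 0 := by linear_combination hq3
    exact (mul_eq_zero.1 hmul).resolve_left (sub_ne_zero.2 hq1)
  have h : IsGeneric q l := ⟨hqq, hl0, hm1, h1, hq, hq2⟩
  constructor
  · intro hW
    exact ⟨mt (exists_rhoInvariant_of_sq_eq_neg hqq) hW,
      mt (exists_rhoInvariant_of_sq_eq_neg_sq hqq) hW⟩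
  · rintro ⟨hl, hl'⟩ ⟨W, hW, hd⟩
    by_cases hQ : eigvecQ ∈ W
    · have := hW.four_le_finrank_of_eigvecQ_mem h hQ
      omega
    · have := hW.finrank_le_two_of_eigvecQ_notMem h hl hl' hQ
      omega
end
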